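/- Let C be a simple tropical curve of genus g with n ≥ 2 leaves (a finite connected metric graph with all vertices of valence 3, with n unbounded leaf edges, and first Betti number g). Then the real vector space Ω(C) of 1-forms on C decomposes as a direct sum Ω(C) = Ω₀(C) ⊕ Ω_H(C) of the subspace of exact 1-forms (those whose integral over every loop vanishes) and the subspace of holomorphic 1-forms (those with all residues zero), with dim Ω₀(C) = n − 1 and dim Ω_H(C) = g. -/

import Mathlib

open Finset

section GraphSetup

variable {V D : Type} [Fintype V] [Fintype D] [DecidableEq V] [DecidableEq D]

/-- A loop in a graph given by darts: a nonempty cyclic chain of darts, injective on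
(unoriented) edges.  `rev` is orientation reversal and `tail` the initial vertex of
a dart; the head of `d` is `tail (rev d)`. -/
def IsLoop (rev : D → D) (tail : D → V) (c : List D) : Prop :=
  c ≠ [] ∧ c.Nodup ∧ (∀ d ∈ c, rev d ∉ c) ∧
    c.Chain' (fun d d' => tail (rev d) = tail d') ∧
    ∀ a ∈ c.head?, ∀ b ∈ c.getLast?, tail (rev b) = tail a

/-- The integral of a 1-form `ω` along a loop `c`: `Σ l(e)·ω(e⃗)`. -/
def loopIntegral (len : D → ℝ) (ω : D → ℝ) (c : List D) : ℝ :=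
  (c.map fun d => len d * ω d).sum

/-- A 1-form on the graph: antisymmetric under orientation reversal and satisfying
the Kirchhoff balancing condition at every internal (non-leaf) vertex. -/
def IsBalanced (rev : D → D) (tail : D → V) (isLeaf : V → Prop) [DecidablePred isLeaf]
    (ω : D → ℝ) : Prop :=
  (∀ d, ω (rev d) = - ω d) ∧
    ∀ v, ¬ isLeaf v → ∑ d ∈ univ.filter (fun d => tail d = v), ω d = 0

/-- A 1-form is exact if its integral over every loop vanishes. -/
def IsExact (rev : D → D) (tail : D → V) (len : D → ℝ) (ω : D → ℝ) : Prop :=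
  ∀ c : List D, IsLoop rev tail c → loopIntegral len ω c = 0

/-- A 1-form is holomorphic if its residues (its values on leaf edges) all vanish. -/
def IsHolomorphic (tail : D → V) (isLeaf : V → Prop) (ω : D → ℝ) : Prop :=
  ∀ d, isLeaf (tail d) → ω d = 0

/-- Connectivity of the graph: any two vertices are joined by a chain of darts. -/
def GraphConnected (rev : D → D) (tail : D → V) : Prop :=
  ∀ v w : V, Relation.ReflTransGen (fun x y => ∃ d, tail d = x ∧ tail (rev d) = y) v w

end GraphSetup
section Submodules

variable {V D : Type} [Fintype V] [Fintype D] [DecidableEq V] [DecidableEq D]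

theorem loopIntegral_add (len a b : D → ℝ) (c : List D) :
    loopIntegral len (a + b) c = loopIntegral len a c + loopIntegral len b c := by
  induction c with
  | nil => simp [loopIntegral]
  | cons d t ih =>
    simp only [loopIntegral, List.map_cons, List.sum_cons] at ih ⊢
    rw [ih, Pi.add_apply]; ring

theorem loopIntegral_smul (len : D → ℝ) (r : ℝ) (a : D → ℝ) (c : List D) :
    loopIntegral len (r • a) c = r * loopIntegral len a c := by
  induction c with
  | nil => simp [loopIntegral]
  | cons d t ih =>
    simp only [loopIntegral, List.map_cons, List.sum_cons] at ih ⊢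
    rw [ih, Pi.smul_apply, smul_eq_mul]; ring

/-- The space `Ω(C)` of 1-forms (balanced, antisymmetric). -/
def OmegaSub (rev : D → D) (tail : D → V) (isLeaf : V → Prop) [DecidablePred isLeaf] :
    Submodule ℝ (D → ℝ) where
  carrier := {ω | IsBalanced rev tail isLeaf ω}
  zero_mem' := ⟨fun d => by simp, fun v hv => by simp⟩
  add_mem' := by
    rintro a b ⟨ha1, ha2⟩ ⟨hb1, hb2⟩
    refine ⟨fun d => ?_, fun v hv => ?_⟩
    · simp only [Pi.add_apply, ha1 d, hb1 d]; ring
    · simp only [Pi.add_apply, Finset.sum_add_distrib, ha2 v hv, hb2 v hv, add_zero]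
  smul_mem' := by
    rintro r a ⟨ha1, ha2⟩
    refine ⟨fun d => ?_, fun v hv => ?_⟩
    · simp only [Pi.smul_apply, smul_eq_mul, ha1 d]; ring
    · simp only [Pi.smul_apply, smul_eq_mul, ← Finset.mul_sum, ha2 v hv, mul_zero]

/-- The space `Ω₀(C)` of exact 1-forms. -/
def Omega0Sub (rev : D → D) (tail : D → V) (isLeaf : V → Prop) [DecidablePred isLeaf]
    (len : D → ℝ) : Submodule ℝ (D → ℝ) where
  carrier := {ω | IsBalanced rev tail isLeaf ω ∧ IsExact rev tail len ω}
  zero_mem' := ⟨(OmegaSub rev tail isLeaf).zero_mem, fun c _ => by simp [loopIntegral]⟩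
  add_mem' := by
    rintro a b ⟨ha, ha'⟩ ⟨hb, hb'⟩
    exact ⟨(OmegaSub rev tail isLeaf).add_mem ha hb,
      fun c hc => by rw [loopIntegral_add, ha' c hc, hb' c hc, add_zero]⟩
  smul_mem' := by
    rintro r a ⟨ha, ha'⟩
    exact ⟨(OmegaSub rev tail isLeaf).smul_mem r ha,
      fun c hc => by rw [loopIntegral_smul, ha' c hc, mul_zero]⟩

/-- The space `Ω_H(C)` of holomorphic 1-forms (all residues zero). -/
def OmegaHSub (rev : D → D) (tail : D → V) (isLeaf : V → Prop) [DecidablePred isLeaf] :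
    Submodule ℝ (D → ℝ) where
  carrier := {ω | IsBalanced rev tail isLeaf ω ∧ IsHolomorphic tail isLeaf ω}
  zero_mem' := ⟨(OmegaSub rev tail isLeaf).zero_mem, fun d _ => rfl⟩
  add_mem' := by
    rintro a b ⟨ha, ha'⟩ ⟨hb, hb'⟩
    exact ⟨(OmegaSub rev tail isLeaf).add_mem ha hb,
      fun d hd => by simp [Pi.add_apply, ha' d hd, hb' d hd]⟩
  smul_mem' := by
    rintro r a ⟨ha, ha'⟩
    exact ⟨(OmegaSub rev tail isLeaf).smul_mem r ha,
      fun d hd => by simp [Pi.smul_apply, ha' d hd]⟩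

end Submodules

/-!
A 1-form is an antisymmetric function on darts whose divergence is supported on the leaves, where
it equals the residue; so the holomorphic forms are the antisymmetric functions of divergence zero.

Following the flow of a nonzero divergence-free form from dart to dart closes up to a loop with
positive integral, so the divergence is injective on exact forms. Its image on the differentials of
functions on vertices therefore has dimension at least `#V - 1`, the dimension of the space of
zero-sum functions on vertices: every zero-sum function is the divergence of an exact form.
Subtracting from a 1-form the exact form with the same divergence leaves a holomorphic form, and
the exact 1-forms correspond to the zero-sum functions on the `n` leaves. By rank–nullity and
Euler's formula, the holomorphic forms have dimension `#E - (#V - 1) = g`.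
-/

section LinearAlgebra

variable {K : Type*} [Field K]

theorem finrank_map_add_finrank_inf_ker {M N : Type*} [AddCommGroup M] [Module K M]
    [AddCommGroup N] [Module K N] (f : M →ₗ[K] N) (p : Submodule K M) [FiniteDimensional K p] :
    Module.finrank K (p.map f) + Module.finrank K (p ⊓ LinearMap.ker f : Submodule K M) =
      Module.finrank K p := by
  have h := LinearMap.finrank_range_add_finrank_ker (f.domRestrict p)
  rwa [LinearMap.range_domRestrict, LinearMap.ker_domRestrict,
    ← Submodule.finrank_map_subtype_eq, Submodule.map_comap_subtype] at h

variable (K) in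
/-- The functions supported on `s` whose values sum to zero; divergences of 1-forms are of this
kind, with `s` the set of leaves. -/
def zeroSum {ι : Type*} [Fintype ι] (s : Finset ι) : Submodule K (ι → K) :=
  LinearMap.ker (LinearMap.funLeft K K (Subtype.val : {i // i ∉ s} → ι)) ⊓
    LinearMap.ker (∑ i, LinearMap.proj i)

theorem mem_zeroSum {ι : Type*} [Fintype ι] {s : Finset ι} {f : ι → K} :
    f ∈ zeroSum K s ↔ (∀ i ∉ s, f i = 0) ∧ ∑ i, f i = 0 := by
  simp [zeroSum, funext_iff, LinearMap.funLeft_apply]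

theorem finrank_zeroSum_add_one {ι : Type*} [Fintype ι] {s : Finset ι} (hs : s.Nonempty) :
    Module.finrank K (zeroSum K s) + 1 = s.card := by
  classical
  obtain ⟨i, hi⟩ := hs
  set restr := LinearMap.funLeft K K (Subtype.val : {i // i ∉ s} → ι)
  set total : (ι → K) →ₗ[K] K := ∑ i, LinearMap.proj i
  have finrank_supported : Module.finrank K (LinearMap.ker restr) = s.card := by
    have h := restr.finrank_range_add_finrank_ker
    rw [LinearMap.range_eq_top.2 (LinearMap.funLeft_surjective_of_injective _ _ _
      Subtype.val_injective), finrank_top, Module.finrank_pi, Module.finrank_pi,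
      Fintype.card_subtype_compl, Fintype.card_coe] at h
    have := s.card_le_univ
    omega
  have map_total : (LinearMap.ker restr).map total = ⊤ := by
    refine (Ideal.eq_top_iff_one _).2 ⟨Pi.single i 1, ?_, by simp [total]⟩
    ext ⟨j, hj⟩
    simp [restr, LinearMap.funLeft_apply, ne_of_mem_of_not_mem hi hj |>.symm]
  have h := finrank_map_add_finrank_inf_ker total (LinearMap.ker restr)
  rw [map_total, finrank_top, Module.finrank_self, finrank_supported] at h
  exact (add_comm _ _).trans h

variable {D : Type*} {rev : D → D}

variable (K rev) in
/-- The functions on darts that change sign under orientation reversal: 1-forms without the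
balancing condition. -/
def antisymmetric : Submodule K (D → K) :=
  LinearMap.ker (LinearMap.funLeft K K rev + LinearMap.id)

theorem mem_antisymmetric {ω : D → K} : ω ∈ antisymmetric K rev ↔ ∀ d, ω (rev d) = -ω d := by
  simp [antisymmetric, funext_iff, LinearMap.funLeft_apply, add_eq_zero_iff_eq_neg]

theorem trace_funLeft_eq_zero [Finite D] (hne : ∀ d, rev d ≠ d) :
    LinearMap.trace K (D → K) (LinearMap.funLeft K K rev) = 0 := by
  classical
  cases nonempty_fintype D
  rw [LinearMap.trace_eq_matrix_trace K (Pi.basisFun K D)]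
  exact Finset.sum_eq_zero fun d _ => by simp [hne]

-- The antisymmetrization `ω ↦ (ω - ω ∘ rev) / 2` is a projection, so its rank is its trace.
theorem two_mul_finrank_antisymmetric [CharZero K] [Fintype D]
    (hrev : Function.Involutive rev) (hne : ∀ d, rev d ≠ d) :
    2 * Module.finrank K (antisymmetric K rev) = Fintype.card D := by
  let P : (D → K) →ₗ[K] (D → K) := (2⁻¹ : K) • (LinearMap.id - LinearMap.funLeft K K rev)
  have hP : LinearMap.IsProj (antisymmetric K rev) P := by
    refine ⟨fun ω => mem_antisymmetric.2 fun d => ?_, fun ω hω => funext fun d => ?_⟩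
    · simp [P, LinearMap.funLeft_apply, hrev d]
      ring
    · simp [P, LinearMap.funLeft_apply, mem_antisymmetric.1 hω d]
      ring
  have htrace := hP.trace
  simp only [P, map_smul, map_sub, trace_funLeft_eq_zero hne, LinearMap.trace_id, sub_zero,
    Module.finrank_pi, smul_eq_mul] at htrace
  have h : (2 * Module.finrank K (antisymmetric K rev) : K) = Fintype.card D := by
    rw [← htrace, mul_inv_cancel_left₀ two_ne_zero]
  exact_mod_cast h

variable {V : Type*} [Fintype D] [DecidableEq V]

variable (K) in
/-- The divergence of a function on darts: its total flow out of each vertex. At a leaf this is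
the residue. -/
def divergence (tail : D → V) : (D → K) →ₗ[K] (V → K) :=
  LinearMap.pi fun v => ∑ d with tail d = v, LinearMap.proj d

theorem divergence_apply (tail : D → V) (ω : D → K) (v : V) :
    divergence K tail ω v = ∑ d with tail d = v, ω d := by
  simp [divergence]

theorem sum_divergence_eq_zero [CharZero K] [Fintype V] (tail : D → V)
    (hrev : Function.Involutive rev) {ω : D → K} (hω : ω ∈ antisymmetric K rev) :
    ∑ v, divergence K tail ω v = 0 := by
  simp only [divergence_apply, Finset.sum_fiberwise]
  refine self_eq_neg.1 ?_
  calc ∑ d, ω d = ∑ d, ω (rev d) := (Equiv.sum_comp hrev.toPerm ω).symm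
    _ = -∑ d, ω d := by simp only [mem_antisymmetric.1 hω, Finset.sum_neg_distrib]

end LinearAlgebra

section Loops

theorem exists_iterate_mem_periodicPts {α : Type*} [Finite α] (f : α → α) (x : α) :
    ∃ k, f^[k] x ∈ Function.periodicPts f := by
  obtain ⟨i, j, hij, heq⟩ := Set.finite_univ.exists_lt_map_eq_of_forall_mem
    (f := fun k => f^[k] x) fun _ => Set.mem_univ _
  refine ⟨i, Function.mk_mem_periodicPts (Nat.sub_pos_of_lt hij) ?_⟩
  rw [Function.IsPeriodicPt, Function.IsFixedPt, ← Function.iterate_add_apply,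
    Nat.sub_add_cancel hij.le, heq]

theorem exists_cycle_nodup_chain {α : Type*} [Finite α] [Nonempty α] {r : α → α → Prop}
    (hr : ∀ a, ∃ b, r a b) : ∃ c : Cycle α, c ≠ Cycle.nil ∧ c.Nodup ∧ c.Chain r := by
  choose f hf using hr
  obtain ⟨k, hk⟩ := exists_iterate_mem_periodicPts f (Classical.arbitrary α)
  refine ⟨Function.periodicOrbit f (f^[k] (Classical.arbitrary α)), ?_,
    Function.nodup_periodicOrbit, (Function.periodicOrbit_chain r).2 fun n _ => ?_⟩
  · simpa [Function.periodicOrbit_eq_nil_iff_not_periodic_pt] using hk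
  · rw [Function.iterate_succ_apply' f n]
    exact hf _

variable {V D : Type} {rev : D → D} {tail : D → V}

theorem isLoop_cons_iff {a : D} {l : List D} :
    IsLoop rev tail (a :: l) ↔ (a :: l).Nodup ∧ (∀ d ∈ a :: l, rev d ∉ a :: l) ∧
      Cycle.Chain (fun d d' => tail (rev d) = tail d') (a :: l : List D) := by
  rw [Cycle.chain_coe_cons, ← List.cons_append, List.isChain_append]
  change _ ∧ _ ∧ _ ∧ List.IsChain (fun d d' => tail (rev d) = tail d') (a :: l) ∧ _ ↔ _
  simp [eq_comm]

theorem exists_isLoop_forall_of_serial [Finite D] {p : D → Prop} (hex : ∃ d, p d)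
    (hrev : ∀ d, p d → ¬p (rev d)) (hnext : ∀ d, p d → ∃ d', p d' ∧ tail (rev d) = tail d') :
    ∃ c, IsLoop rev tail c ∧ ∀ d ∈ c, p d := by
  have : Nonempty {d // p d} := nonempty_subtype.2 hex
  obtain ⟨c, hne, hnodup, hchain⟩ := exists_cycle_nodup_chain
    (r := fun d d' : {d // p d} => tail (rev d) = tail d')
    fun ⟨d, hd⟩ => let ⟨d', hd', h⟩ := hnext d hd; ⟨⟨d', hd'⟩, h⟩
  induction c using Cycle.induction_on with
  | nil => exact absurd rfl hne
  | cons a l _ =>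
    have hp : ∀ d ∈ (a :: l).map Subtype.val, p d := List.forall_mem_map.2 fun d _ => d.2
    refine ⟨(a :: l).map Subtype.val, isLoop_cons_iff.2 ⟨?_, ?_, ?_⟩, hp⟩
    · exact (Cycle.nodup_coe_iff.1 hnodup).map Subtype.val_injective
    · exact fun d hd hd' => hrev d (hp d hd) (hp _ hd')
    · exact (Cycle.chain_map (r := fun d d' => tail (rev d) = tail d') Subtype.val).2 hchain

end Loops

section ExactForms

variable {V D : Type} {rev : D → D} {tail : D → V} {len : D → ℝ}

section Circulation

variable [Fintype D] [DecidableEq V]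

theorem exists_pos_of_tail_eq_head {ω : D → ℝ} (hω : ω ∈ antisymmetric ℝ rev)
    (hdiv : divergence ℝ tail ω = 0) {d : D} (hd : 0 < ω d) :
    ∃ d', 0 < ω d' ∧ tail (rev d) = tail d' := by
  have hsum : ∑ e with tail e = tail (rev d), ω e = 0 := by
    rw [← divergence_apply, hdiv, Pi.zero_apply]
  have hne : ω (rev d) ≠ 0 := by
    rw [mem_antisymmetric.1 hω]
    exact neg_ne_zero.2 hd.ne'
  obtain ⟨d', hd', hpos⟩ := Finset.exists_pos_of_sum_zero_of_exists_nonzero ω hsum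
    ⟨rev d, Finset.mem_filter.2 ⟨Finset.mem_univ _, rfl⟩, hne⟩
  exact ⟨d', hpos, (Finset.mem_filter.1 hd').2.symm⟩

theorem eq_zero_of_isExact (hlen : ∀ d, 0 < len d) {ω : D → ℝ} (hω : ω ∈ antisymmetric ℝ rev)
    (hdiv : divergence ℝ tail ω = 0) (hex : IsExact rev tail len ω) : ω = 0 := by
  have hanti := mem_antisymmetric.1 hω
  have hnonpos : ∀ d, ω d ≤ 0 := by
    by_contra! hpos
    obtain ⟨c, hc, hcpos⟩ := exists_isLoop_forall_of_serial (rev := rev) (tail := tail) hpos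
      (fun d hd hd' => by linarith [hanti d]) fun _ => exists_pos_of_tail_eq_head hω hdiv
    have hint : 0 < loopIntegral len ω c := by
      refine List.sum_pos _ (List.forall_mem_map.2 fun d hd => ?_) (by simpa using hc.1)
      exact mul_pos (hlen d) (hcpos d hd)
    exact hint.ne' (hex c hc)
  exact funext fun d => le_antisymm (hnonpos d) (by simpa [hanti] using hnonpos (rev d))

end Circulation

/-- The differential of a function on vertices: its slopes along the darts. It provides
exact forms with prescribed divergence. -/
noncomputable def differential (rev : D → D) (tail : D → V) (len : D → ℝ) :
    (V → ℝ) →ₗ[ℝ] (D → ℝ) :=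
  LinearMap.pi fun d => (len d)⁻¹ •
    (LinearMap.proj (R := ℝ) (φ := fun _ => ℝ) (tail (rev d)) - LinearMap.proj (tail d))

theorem differential_apply (f : V → ℝ) (d : D) :
    differential rev tail len f d = (len d)⁻¹ * (f (tail (rev d)) - f (tail d)) := rfl

theorem differential_mem_antisymmetric (hrev : Function.Involutive rev)
    (hlensym : ∀ d, len (rev d) = len d) (f : V → ℝ) :
    differential rev tail len f ∈ antisymmetric ℝ rev :=
  mem_antisymmetric.2 fun d => by
    rw [differential_apply, differential_apply, hrev d, hlensym]
    ring

theorem loopIntegral_differential_of_isChain (hlen : ∀ d, len d ≠ 0) (f : V → ℝ)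
    {a : D} {l : List D} (hl : (a :: l).IsChain fun d d' => tail (rev d) = tail d') :
    loopIntegral len (differential rev tail len f) (a :: l) =
      f (tail (rev ((a :: l).getLast (List.cons_ne_nil a l)))) - f (tail a) := by
  have hedge : ∀ d, len d * differential rev tail len f d = f (tail (rev d)) - f (tail d) :=
    fun d => mul_inv_cancel_left₀ (hlen d) _
  induction l generalizing a with
  | nil => simp [loopIntegral, hedge]
  | cons b t ih =>
    rw [List.isChain_cons_cons] at hl
    calc loopIntegral len (differential rev tail len f) (a :: b :: t)
      _ = len a * differential rev tail len f a +
          loopIntegral len (differential rev tail len f) (b :: t) := List.sum_cons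
      _ = _ := by rw [ih hl.2, hedge, hl.1, List.getLast_cons (List.cons_ne_nil b t)]; ring

theorem isExact_differential (hlen : ∀ d, len d ≠ 0) (f : V → ℝ) :
    IsExact rev tail len (differential rev tail len f) := by
  rintro (_ | ⟨a, l⟩) ⟨hne, -, -, hchain, hclosed⟩
  · exact absurd rfl hne
  · rw [loopIntegral_differential_of_isChain hlen f hchain,
      hclosed a rfl _ (List.getLast_mem_getLast? (List.cons_ne_nil a l)), sub_self]

theorem eq_of_differential_eq_zero (hconn : GraphConnected rev tail) (hlen : ∀ d, len d ≠ 0)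
    {f : V → ℝ} (hf : differential rev tail len f = 0) (v w : V) : f v = f w := by
  induction hconn v w with
  | refl => rfl
  | tail _ hstep ih =>
    obtain ⟨d, rfl, rfl⟩ := hstep
    have hslope : (len d)⁻¹ * (f (tail (rev d)) - f (tail d)) = 0 := congrFun hf d
    rw [ih, eq_comm, ← sub_eq_zero]
    exact (mul_eq_zero.1 hslope).resolve_left (inv_ne_zero (hlen d))

theorem finrank_ker_differential_le_one [Finite V] [Nonempty V] (hconn : GraphConnected rev tail)
    (hlen : ∀ d, len d ≠ 0) : Module.finrank ℝ (LinearMap.ker (differential rev tail len)) ≤ 1 := by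
  refine finrank_le_one ⟨fun _ => 1, funext fun d => by simp [differential_apply]⟩
    fun ⟨f, hf⟩ => ⟨f (Classical.arbitrary V), Subtype.ext (funext fun v => ?_)⟩
  simpa using eq_of_differential_eq_zero hconn hlen hf _ v

variable [Fintype V] [Nonempty V] [Fintype D] [DecidableEq V]

theorem map_divergence_range_differential (hrev : Function.Involutive rev)
    (hconn : GraphConnected rev tail) (hlen : ∀ d, 0 < len d)
    (hlensym : ∀ d, len (rev d) = len d) :
    (LinearMap.range (differential rev tail len)).map (divergence ℝ tail) = zeroSum ℝ univ := by
  have hlen' : ∀ d, len d ≠ 0 := fun d => (hlen d).ne'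
  have hinj : LinearMap.range (differential rev tail len) ⊓
      LinearMap.ker (divergence ℝ tail) = ⊥ := by
    rw [eq_bot_iff]
    rintro _ ⟨⟨f, rfl⟩, hdiv⟩
    exact eq_zero_of_isExact hlen (differential_mem_antisymmetric hrev hlensym f) hdiv
      (isExact_differential hlen' f)
  refine Submodule.eq_of_le_of_finrank_le ?_ ?_
  · rintro _ ⟨_, ⟨f, rfl⟩, rfl⟩
    exact mem_zeroSum.2 ⟨by simp, sum_divergence_eq_zero tail hrev
      (differential_mem_antisymmetric hrev hlensym f)⟩
  · have hmap := finrank_map_add_finrank_inf_ker (divergence ℝ tail)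
      (LinearMap.range (differential rev tail len))
    have hrank := LinearMap.finrank_range_add_finrank_ker (differential rev tail len)
    have hker := finrank_ker_differential_le_one hconn hlen'
    have hzero := finrank_zeroSum_add_one (K := ℝ) (univ_nonempty (α := V))
    rw [hinj, finrank_bot] at hmap
    rw [Module.finrank_pi] at hrank
    rw [card_univ] at hzero
    omega

theorem map_divergence_antisymmetric (hrev : Function.Involutive rev)
    (hconn : GraphConnected rev tail) (hlen : ∀ d, 0 < len d)
    (hlensym : ∀ d, len (rev d) = len d) :
    (antisymmetric ℝ rev).map (divergence ℝ tail) = zeroSum ℝ univ := by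
  refine le_antisymm ?_ ?_
  · rintro _ ⟨ω, hω, rfl⟩
    exact mem_zeroSum.2 ⟨by simp, sum_divergence_eq_zero tail hrev hω⟩
  · rw [← map_divergence_range_differential hrev hconn hlen hlensym]
    refine Submodule.map_mono ?_
    rintro _ ⟨f, rfl⟩
    exact differential_mem_antisymmetric hrev hlensym f

end ExactForms

section Decomposition

variable {V D : Type} [Fintype D] [DecidableEq V]
  {rev : D → D} {tail : D → V} {isLeaf : V → Prop} {len : D → ℝ}

theorem isHolomorphic_iff (hleaf : ∀ v, isLeaf v → (univ.filter fun d => tail d = v).card = 1)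
    {ω : D → ℝ} : IsHolomorphic tail isLeaf ω ↔ ∀ v, isLeaf v → divergence ℝ tail ω v = 0 := by
  have residue : ∀ d, isLeaf (tail d) → divergence ℝ tail ω (tail d) = ω d := fun d hd => by
    obtain ⟨e, he⟩ := card_eq_one.1 (hleaf _ hd)
    have hde : d = e := mem_singleton.1 (he ▸ mem_filter.2 ⟨mem_univ d, rfl⟩)
    rw [divergence_apply, he, sum_singleton, hde]
  refine ⟨fun h v hv => ?_, fun h d hd => by rw [← residue d hd, h _ hd]⟩
  rw [divergence_apply]
  refine sum_eq_zero fun d hd => h d ?_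
  rwa [(mem_filter.1 hd).2]

variable [DecidablePred isLeaf]

theorem mem_OmegaSub_iff {ω : D → ℝ} : ω ∈ OmegaSub rev tail isLeaf ↔
    ω ∈ antisymmetric ℝ rev ∧ ∀ v, ¬isLeaf v → divergence ℝ tail ω v = 0 := by
  simp only [mem_antisymmetric, divergence_apply]
  exact Iff.rfl

theorem OmegaHSub_eq (hleaf : ∀ v, isLeaf v → (univ.filter fun d => tail d = v).card = 1) :
    OmegaHSub rev tail isLeaf = antisymmetric ℝ rev ⊓ LinearMap.ker (divergence ℝ tail) := by
  ext ω
  have h : ω ∈ OmegaHSub rev tail isLeaf ↔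
      ω ∈ OmegaSub rev tail isLeaf ∧ IsHolomorphic tail isLeaf ω := Iff.rfl
  rw [h, mem_OmegaSub_iff, isHolomorphic_iff hleaf, Submodule.mem_inf, LinearMap.mem_ker,
    funext_iff, and_assoc]
  exact and_congr_right' ⟨fun h v => (em (isLeaf v)).elim (h.2 v) (h.1 v),
    fun h => ⟨fun v _ => h v, fun v _ => h v⟩⟩

theorem map_divergence_OmegaSub_le [Fintype V] (hrev : Function.Involutive rev) :
    (OmegaSub rev tail isLeaf).map (divergence ℝ tail) ≤
      zeroSum ℝ (univ.filter fun v => isLeaf v) := by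
  rintro _ ⟨ω, hω, rfl⟩
  obtain ⟨hanti, hbal⟩ := mem_OmegaSub_iff.1 hω
  exact mem_zeroSum.2 ⟨by simpa using hbal, sum_divergence_eq_zero tail hrev hanti⟩

theorem finrank_OmegaHSub [Fintype V] [Nonempty V] (hrev : Function.Involutive rev)
    (hrevne : ∀ d, rev d ≠ d) (hconn : GraphConnected rev tail)
    (hleaf : ∀ v, isLeaf v → (univ.filter fun d => tail d = v).card = 1)
    (hlen : ∀ d, 0 < len d) (hlensym : ∀ d, len (rev d) = len d) :
    2 * (Fintype.card V + Module.finrank ℝ (OmegaHSub rev tail isLeaf)) = Fintype.card D + 2 := by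
  have hmap := finrank_map_add_finrank_inf_ker (divergence ℝ tail) (antisymmetric ℝ rev)
  rw [map_divergence_antisymmetric hrev hconn hlen hlensym, ← OmegaHSub_eq hleaf] at hmap
  have hzero := finrank_zeroSum_add_one (K := ℝ) (univ_nonempty (α := V))
  rw [card_univ] at hzero
  have hanti := two_mul_finrank_antisymmetric (K := ℝ) hrev hrevne
  omega

variable [DecidableEq D]

theorem Omega0Sub_le_OmegaSub : Omega0Sub rev tail isLeaf len ≤ OmegaSub rev tail isLeaf :=
  fun _ hω => hω.1

theorem Omega0Sub_inf_ker_divergence (hlen : ∀ d, 0 < len d) :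
    Omega0Sub rev tail isLeaf len ⊓ LinearMap.ker (divergence ℝ tail) = ⊥ := by
  rw [eq_bot_iff]
  rintro ω ⟨⟨hω, hex⟩, hdiv⟩
  exact eq_zero_of_isExact hlen (mem_OmegaSub_iff.1 hω).1 hdiv hex

theorem map_divergence_Omega0Sub [Fintype V] [Nonempty V] (hrev : Function.Involutive rev)
    (hconn : GraphConnected rev tail) (hlen : ∀ d, 0 < len d)
    (hlensym : ∀ d, len (rev d) = len d) :
    (Omega0Sub rev tail isLeaf len).map (divergence ℝ tail) =
      zeroSum ℝ (univ.filter fun v => isLeaf v) := by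
  refine le_antisymm ((Submodule.map_mono Omega0Sub_le_OmegaSub).trans
    (map_divergence_OmegaSub_le hrev)) fun h hh => ?_
  obtain ⟨hsupp, hsum⟩ := mem_zeroSum.1 hh
  obtain ⟨_, ⟨f, rfl⟩, rfl⟩ : h ∈ (LinearMap.range (differential rev tail len)).map
      (divergence ℝ tail) := by
    rw [map_divergence_range_differential hrev hconn hlen hlensym]
    exact mem_zeroSum.2 ⟨by simp, hsum⟩
  refine ⟨_, ⟨mem_OmegaSub_iff.2 ⟨differential_mem_antisymmetric hrev hlensym f, ?_⟩,
    isExact_differential (fun d => (hlen d).ne') f⟩, rfl⟩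
  simpa using hsupp

theorem finrank_Omega0Sub_add_one [Fintype V] [Nonempty V] (hrev : Function.Involutive rev)
    (hconn : GraphConnected rev tail) (hlen : ∀ d, 0 < len d)
    (hlensym : ∀ d, len (rev d) = len d) (hne : (univ.filter fun v => isLeaf v).Nonempty) :
    Module.finrank ℝ (Omega0Sub rev tail isLeaf len) + 1 =
      (univ.filter fun v => isLeaf v).card := by
  rw [← finrank_zeroSum_add_one (K := ℝ) hne, ← map_divergence_Omega0Sub hrev hconn hlen hlensym,
    ← finrank_map_add_finrank_inf_ker (divergence ℝ tail), Omega0Sub_inf_ker_divergence hlen,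
    finrank_bot, add_zero]

theorem Omega0Sub_sup_OmegaHSub [Finite V] [Nonempty V] (hrev : Function.Involutive rev)
    (hconn : GraphConnected rev tail)
    (hleaf : ∀ v, isLeaf v → (univ.filter fun d => tail d = v).card = 1)
    (hlen : ∀ d, 0 < len d) (hlensym : ∀ d, len (rev d) = len d) :
    Omega0Sub rev tail isLeaf len ⊔ OmegaHSub rev tail isLeaf = OmegaSub rev tail isLeaf := by
  cases nonempty_fintype V
  refine le_antisymm (sup_le Omega0Sub_le_OmegaSub fun _ hω => hω.1) fun ω hω => ?_
  have hdiv : divergence ℝ tail ω ∈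
      (Omega0Sub rev tail isLeaf len).map (divergence ℝ tail) := by
    rw [map_divergence_Omega0Sub hrev hconn hlen hlensym]
    exact map_divergence_OmegaSub_le hrev (Submodule.mem_map_of_mem hω)
  obtain ⟨η, hη, hηω⟩ := hdiv
  refine Submodule.mem_sup.2 ⟨η, hη, ω - η, ?_, add_sub_cancel η ω⟩
  rw [OmegaHSub_eq hleaf]
  exact ⟨Submodule.sub_mem _ (mem_OmegaSub_iff.1 hω).1 (mem_OmegaSub_iff.1 hη.1).1,
    LinearMap.sub_mem_ker_iff.2 hηω.symm⟩

end Decomposition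

theorem stmt4_general {V D : Type} [Fintype V] [Fintype D] [DecidableEq V] [DecidableEq D]
    (rev : D → D) (tail : D → V) (isLeaf : V → Prop) [DecidablePred isLeaf]
    (len : D → ℝ) (n g : ℕ)
    (hrev : ∀ d, rev (rev d) = d) (hrevne : ∀ d, rev d ≠ d)
    (hconn : GraphConnected rev tail)
    (hleaf : ∀ v, isLeaf v → (univ.filter fun d => tail d = v).card = 1)
    (hlen : ∀ d, 0 < len d) (hlensym : ∀ d, len (rev d) = len d)
    (hn : (univ.filter fun v => isLeaf v).card = n) (hn1 : 1 ≤ n)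
    (hg : Fintype.card D + 2 = 2 * Fintype.card V + 2 * g) :
    Omega0Sub rev tail isLeaf len ⊔ OmegaHSub rev tail isLeaf = OmegaSub rev tail isLeaf ∧
    Omega0Sub rev tail isLeaf len ⊓ OmegaHSub rev tail isLeaf = ⊥ ∧
    Module.finrank ℝ (Omega0Sub rev tail isLeaf len) = n - 1 ∧
    Module.finrank ℝ (OmegaHSub rev tail isLeaf) = g := by
  have hleaves : (univ.filter fun v => isLeaf v).Nonempty := card_pos.1 (by omega)
  have : Nonempty V := hleaves.to_type
  refine ⟨Omega0Sub_sup_OmegaHSub hrev hconn hleaf hlen hlensym, ?_, ?_, ?_⟩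
  · exact eq_bot_mono (inf_le_inf_left _ ((OmegaHSub_eq hleaf).trans_le inf_le_right))
      (Omega0Sub_inf_ker_divergence hlen)
  · have := finrank_Omega0Sub_add_one hrev hconn hlen hlensym hleaves
    omega
  · have := finrank_OmegaHSub hrev hrevne hconn hleaf hlen hlensym
    omega

/-- On a simple tropical curve of genus `g` with `n ≥ 2` leaves, the space of 1-forms
decomposes as `Ω(C) = Ω₀(C) ⊕ Ω_H(C)`, with `dim Ω₀(C) = n − 1` and
`dim Ω_H(C) = g`.  (The genus enters via Euler's formula `#E = #V + g − 1`,
i.e. `#D + 2 = 2·#V + 2g` for darts.) -/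
theorem stmt4 {V D : Type} [Fintype V] [Fintype D] [DecidableEq V] [DecidableEq D]
    (rev : D → D) (tail : D → V) (isLeaf : V → Prop) [DecidablePred isLeaf]
    (len : D → ℝ) (n g : ℕ)
    (hrev : ∀ d, rev (rev d) = d) (hrevne : ∀ d, rev d ≠ d)
    (hconn : GraphConnected rev tail)
    (hleaf : ∀ v, isLeaf v ↔ (univ.filter fun d => tail d = v).card = 1)
    (htri : ∀ v, ¬ isLeaf v → (univ.filter fun d => tail d = v).card = 3)
    (hlen : ∀ d, 0 < len d) (hlensym : ∀ d, len (rev d) = len d)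
    (hn : (univ.filter fun v => isLeaf v).card = n) (hn2 : 2 ≤ n)
    (hg : Fintype.card D + 2 = 2 * Fintype.card V + 2 * g) :
    Omega0Sub rev tail isLeaf len ⊔ OmegaHSub rev tail isLeaf = OmegaSub rev tail isLeaf ∧
    Omega0Sub rev tail isLeaf len ⊓ OmegaHSub rev tail isLeaf = ⊥ ∧
    Module.finrank ℝ (Omega0Sub rev tail isLeaf len) = n - 1 ∧
    Module.finrank ℝ (OmegaHSub rev tail isLeaf) = g :=
  stmt4_general rev tail isLeaf len n g hrev hrevne hconn (fun v => (hleaf v).1) hlen hlensym hn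
    (one_le_two.trans hn2) hg
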